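/- Let A be a commutative unital complex Banach algebra with a maximal ideal M algebraically generated by t_1,…,t_k, with dim_ℂ(cl(M^n)/cl(M^{n+1})) = C(n+k−1,n) for every n ≥ 1, and let φ be a character of A with ker φ = M. Then there exist δ > 0 and a continuous injective map Γ from the open polydisc D = {λ ∈ ℂ^k : |λ_i| < δ for all i} into the character space M(A) such that Γ(0) = φ and, for every x ∈ A, the function λ ↦ Γ(λ)(x) is analytic on D; i.e., there is an analytic variety at φ. -/

import Mathlib

/-- The closure of the `n`-th power of an ideal, viewed as a `ℂ`-submodule. -/
def idealPowClosure {A : Type*} [CommRing A] [Algebra ℂ A] [TopologicalSpace A]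
    [ContinuousAdd A] [ContinuousConstSMul ℂ A] (M : Ideal A) (n : ℕ) : Submodule ℂ A :=
  ((M ^ n).restrictScalars ℂ).topologicalClosure

open MvPolynomial in
theorem bl_rank_homog (k n : ℕ) :
    Module.Finite ℂ (homogeneousSubmodule (Fin k) ℂ n) ∧
    Module.finrank ℂ (homogeneousSubmodule (Fin k) ℂ n) = (n + k - 1).choose n := by
  let e0 : Sym (Fin k) n ≃ {d : Fin k →₀ ℕ | d.degree = n} :=
    (Sym.equivNatSum (Fin k) n).trans (Equiv.subtypeEquivRight (fun d => Iff.rfl))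
  have hfin : Fintype {d : Fin k →₀ ℕ | d.degree = n} := Fintype.ofEquiv _ e0
  have key : Nonempty (homogeneousSubmodule (Fin k) ℂ n ≃ₗ[ℂ]
      ({d : Fin k →₀ ℕ | d.degree = n} →₀ ℂ)) := by
    rw [homogeneousSubmodule_eq_finsupp_supported]
    exact ⟨(AddMonoidAlgebra.supportedEquivFinsupp _ : _ ≃ₗ[ℂ] _)⟩
  obtain ⟨e⟩ := key
  refine ⟨Module.Finite.equiv e.symm, ?_⟩
  rw [e.finrank_eq, Module.finrank_finsupp_self, ← Fintype.card_congr e0,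
    Sym.card_sym_eq_choose, Fintype.card_fin, Nat.add_comm]

open MvPolynomial in
theorem bl_aeval_homog_mem {A : Type*} [CommRing A] [Algebra ℂ A] {k : ℕ} (t : Fin k → A)
    {n : ℕ} {q : MvPolynomial (Fin k) ℂ} (hq : q.IsHomogeneous n) :
    aeval t q ∈ (Ideal.span (Set.range t)) ^ n := by
  rw [Ideal.mem_span_pow_iff_exists_isHomogeneous]
  refine ⟨map (algebraMap ℂ A) q, hq.map _, ?_⟩
  rw [eval_map, aeval_def]

open MvPolynomial in
theorem bl_aeval_mem {A : Type*} [CommRing A] [Algebra ℂ A] {k : ℕ} (t : Fin k → A)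
    {n : ℕ} {q : MvPolynomial (Fin k) ℂ} (hq : ∀ j < n, homogeneousComponent j q = 0) :
    aeval t q ∈ (Ideal.span (Set.range t)) ^ n := by
  rw [← sum_homogeneousComponent q, map_sum]
  refine Ideal.sum_mem _ fun i _ => ?_
  rcases lt_or_ge i n with h | h
  · rw [hq i h]; simp
  · exact Ideal.pow_le_pow_right h (bl_aeval_homog_mem t (homogeneousComponent_isHomogeneous i q))

open MvPolynomial in
theorem bl_exists_homog {A : Type*} [CommRing A] [Algebra ℂ A] {k : ℕ} (t : Fin k → A)
    (φ : A →ₐ[ℂ] ℂ) (hφ : ∀ x, φ x = 0 → x ∈ Ideal.span (Set.range t))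
    {n : ℕ} {x : A} (hx : x ∈ (Ideal.span (Set.range t)) ^ n) :
    ∃ q : MvPolynomial (Fin k) ℂ, q.IsHomogeneous n ∧
      x - aeval t q ∈ (Ideal.span (Set.range t)) ^ (n + 1) := by
  rw [Ideal.mem_span_pow_iff_exists_isHomogeneous] at hx
  obtain ⟨p, hp, rfl⟩ := hx
  refine ⟨map (φ : A →+* ℂ) p, hp.map _, ?_⟩
  rw [aeval_def, eval₂_map, ← eval₂_id, eval₂_eq, eval₂_eq, ← Finset.sum_sub_distrib]
  refine Ideal.sum_mem _ fun d hd => ?_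
  rw [← sub_mul, pow_succ']
  refine Ideal.mul_mem_mul (hφ _ (by simp)) ?_
  have : aeval t (monomial d (1:ℂ)) ∈ (Ideal.span (Set.range t)) ^ n := 
    bl_aeval_homog_mem t (isHomogeneous_monomial _ (by
      have := hp (mem_support_iff.mp hd)
      exact (DFunLike.congr_fun Finsupp.degree_eq_weight_one d).trans this))
  rw [aeval_monomial] at this
  simpa [Finsupp.prod] using this

open MvPolynomial in
theorem bl_unique_homog {A : Type*} [NormedCommRing A] [NormedAlgebra ℂ A] [CompleteSpace A]
    (k : ℕ) (t : Fin k → A) (M : Ideal A) 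
    (hgen : M = Ideal.span (Set.range t))
    (hdim : ∀ n : ℕ, 1 ≤ n →
      Module.rank ℂ
        (↥(idealPowClosure M n) ⧸
          Submodule.comap (idealPowClosure M n).subtype (idealPowClosure M (n + 1)))
        = ((n + k - 1).choose n : Cardinal))
    (φ : WeakDual.characterSpace ℂ A) (hφ : ∀ x : A, φ x = 0 ↔ x ∈ M)
    {n : ℕ} {q : MvPolynomial (Fin k) ℂ} (hq : q.IsHomogeneous n) 
    (h : aeval t q ∈ idealPowClosure M (n + 1)) : q = 0 := by
  rcases Nat.eq_zero_or_pos n with rfl | hn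
  · have hc : IsClosed (M : Set A) := by
      have : (M : Set A) = (fun x => φ x) ⁻¹' {0} := by
        ext x; simp [hφ]
      rw [this]
      exact isClosed_singleton.preimage (map_continuous φ)
    have h1 : aeval t q ∈ M := by
      have : aeval t q ∈ closure ((M ^ (0+1) : Ideal A) : Set A) := h
      rw [zero_add, pow_one, hc.closure_eq] at this
      exact this
    obtain ⟨c, rfl⟩ : ∃ c, q = C c := 
      ⟨_, (totalDegree_eq_zero_iff_eq_C).1 (Nat.le_zero.1 hq.totalDegree_le)⟩
    rw [← hφ, aeval_C, AlgHomClass.commutes] at h1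
    simp at h1
    simp [h1]
  · obtain ⟨hf, hr⟩ := bl_rank_homog k n
    let f0 : homogeneousSubmodule (Fin k) ℂ n →ₗ[ℂ] A :=
      (aeval t).toLinearMap ∘ₗ (homogeneousSubmodule (Fin k) ℂ n).subtype
    have hf0 : ∀ q, f0 q ∈ idealPowClosure M n := fun q => by
      apply Submodule.le_topologicalClosure
      have := bl_aeval_homog_mem t q.2
      rw [← hgen] at this
      exact this
    let f : homogeneousSubmodule (Fin k) ℂ n →ₗ[ℂ] _ := 
      (Submodule.comap (idealPowClosure M n).subtype (idealPowClosure M (n + 1))).mkQ ∘ₗ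
        f0.codRestrict _ hf0
    have hsub : idealPowClosure M n ≤ idealPowClosure M (n+1) ⊔ LinearMap.range f0 := by
      apply Submodule.topologicalClosure_minimal
      · intro x hx
        have hx' : x ∈ (Ideal.span (Set.range t)) ^ n := by rw [← hgen]; exact hx
        obtain ⟨q, hq, hxq⟩ := bl_exists_homog t (WeakDual.CharacterSpace.toAlgHom φ)
          (fun x hx => by rw [← hgen]; exact (hφ x).1 hx) hx'
        rw [← hgen] at hxq
        refine Submodule.mem_sup.2 ⟨_, Submodule.le_topologicalClosure _ hxq, _, ⟨⟨q, hq⟩, rfl⟩, ?_⟩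
        simp [f0]
      · exact Submodule.isClosed_sup_finiteDimensional _ _
          (Submodule.isClosed_topologicalClosure _)
    have hsurj : Function.Surjective f := by
      intro y
      obtain ⟨⟨x, hx⟩, rfl⟩ := Submodule.mkQ_surjective _ y
      obtain ⟨a, ha, b, ⟨q, rfl⟩, hab⟩ := Submodule.mem_sup.1 (hsub hx)
      refine ⟨q, ?_⟩
      simp only [f, LinearMap.comp_apply]
      rw [← sub_eq_zero, ← map_sub, ← LinearMap.mem_ker, Submodule.ker_mkQ, Submodule.mem_comap]
      have : f0 q - x = -a := by rw [← hab]; abel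
      simp [this, ha]
    have hrank : Module.finrank ℂ (homogeneousSubmodule (Fin k) ℂ n) = Module.finrank ℂ
        (↥(idealPowClosure M n) ⧸
          Submodule.comap (idealPowClosure M n).subtype (idealPowClosure M (n + 1))) := by
      rw [hr, Module.finrank, hdim n hn, Cardinal.toNat_natCast]
    have := Module.Finite.of_surjective f hsurj
    have hinj := (LinearMap.injective_iff_surjective_of_finrank_eq_finrank hrank).2 hsurj
    have : (⟨q, hq⟩ : homogeneousSubmodule (Fin k) ℂ n) = 0 := by
      apply hinj
      rw [map_zero]
      simp only [f, LinearMap.comp_apply]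
      rw [← LinearMap.mem_ker, Submodule.ker_mkQ, Submodule.mem_comap]
      exact h
    exact congrArg Subtype.val this

open MvPolynomial in
theorem bl_unique {A : Type*} [NormedCommRing A] [NormedAlgebra ℂ A] [CompleteSpace A]
    (k : ℕ) (t : Fin k → A) (M : Ideal A) 
    (hgen : M = Ideal.span (Set.range t))
    (hdim : ∀ n : ℕ, 1 ≤ n →
      Module.rank ℂ
        (↥(idealPowClosure M n) ⧸
          Submodule.comap (idealPowClosure M n).subtype (idealPowClosure M (n + 1)))
        = ((n + k - 1).choose n : Cardinal))
    (φ : WeakDual.characterSpace ℂ A) (hφ : ∀ x : A, φ x = 0 ↔ x ∈ M)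
    (n : ℕ) (p : MvPolynomial (Fin k) ℂ) 
    (h : aeval t p ∈ M ^ n) : ∀ j < n, homogeneousComponent j p = 0 := by
  induction n with
  | zero => intro j hj; omega
  | succ n ih =>
    have ih' := ih (Ideal.pow_le_pow_right (Nat.le_succ n) h)
    intro j hj
    rcases Nat.lt_succ_iff_lt_or_eq.1 hj with hj | rfl
    · exact ih' j hj
    · apply bl_unique_homog k t M hgen hdim φ hφ (homogeneousComponent_isHomogeneous j p)
      apply Submodule.le_topologicalClosure
      change _ ∈ M ^ (j+1)
      have h2 : aeval t (p - homogeneousComponent j p) ∈ M ^ (j+1) := by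
        rw [hgen]
        apply bl_aeval_mem
        intro i hi
        rw [map_sub, homogeneousComponent_of_mem (homogeneousComponent_mem j p)]
        rcases Nat.lt_succ_iff_lt_or_eq.1 hi with hi | rfl
        · rw [ih' i hi, if_neg hi.ne, sub_zero]
        · simp
      rw [map_sub] at h2
      have := Ideal.sub_mem _ h h2
      rwa [sub_sub_cancel] at this

/-- Homogeneous Taylor polynomials of `x` built from division operators `S`. -/
noncomputable def blP {A : Type*} {k : ℕ} (f : A → ℂ) (S : A → Fin k → A) :
    ℕ → A → MvPolynomial (Fin k) ℂ
  | 0, x => MvPolynomial.C (f x)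
  | n + 1, x => ∑ i, MvPolynomial.X i * blP f S n (S x i)

/-- The multilinear maps inducing the homogeneous polynomials `blP`. -/
noncomputable def blM {A : Type*} {k : ℕ} (f : A → ℂ) (S : A → Fin k → A) :
    (n : ℕ) → A → ContinuousMultilinearMap ℂ (fun _ : Fin n => (Fin k → ℂ)) ℂ
  | 0, x => ContinuousMultilinearMap.uncurry0 ℂ _ (f x)
  | n + 1, x => ContinuousLinearMap.uncurryLeft
      (∑ i, (ContinuousLinearMap.proj (R := ℂ) (φ := fun _ : Fin k => ℂ) i).smulRight
        (blM f S n (S x i)))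

theorem blM_apply {A : Type*} {k : ℕ} (f : A → ℂ) (S : A → Fin k → A) (l : Fin k → ℂ) (n : ℕ) :
    ∀ x, blM f S n x (fun _ => l) = MvPolynomial.eval l (blP f S n x) := by
  induction n with
  | zero => intro x; simp [blM, blP]
  | succ n ih =>
    intro x
    simp only [blM, blP, ContinuousLinearMap.uncurryLeft_apply, map_sum, map_mul,
      MvPolynomial.eval_X, ← ih]
    simp
    rfl

theorem blM_norm {A : Type*} [NormedCommRing A] {k : ℕ} (f : A → ℂ) (S : A → Fin k → A)
    (K C : ℝ) (hK : 0 ≤ K) (hC : 0 ≤ C)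
    (hf : ∀ x, ‖f x‖ ≤ K * ‖x‖) (hS : ∀ x i, ‖S x i‖ ≤ C * ‖x‖) (n : ℕ) :
    ∀ x, ‖blM f S n x‖ ≤ K * (k * C + 1) ^ n * ‖x‖ := by
  induction n with
  | zero => intro x; simpa [blM] using hf x
  | succ n ih =>
    intro x
    have hB : 0 ≤ k * C + 1 := by positivity
    rw [blM, ContinuousLinearMap.uncurryLeft_norm]
    calc ‖∑ i, (ContinuousLinearMap.proj (R := ℂ) (φ := fun _ : Fin k => ℂ) i).smulRight
          (blM f S n (S x i))‖ ≤ ∑ i : Fin k, K * (k * C + 1) ^ n * (C * ‖x‖) := by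
            refine (norm_sum_le Finset.univ (fun i : Fin k =>
              (ContinuousLinearMap.proj (R := ℂ) (φ := fun _ : Fin k => ℂ) i).smulRight
                (blM f S n (S x i)))).trans (Finset.sum_le_sum fun i _ => ?_)
            have h1 : ‖(ContinuousLinearMap.proj (R := ℂ) (φ := fun _ : Fin k => ℂ) i)‖ ≤ 1 :=
              ContinuousLinearMap.opNorm_le_bound _ zero_le_one fun v => by
                simpa using norm_le_pi_norm v i
            rw [ContinuousLinearMap.norm_smulRight_apply]
            calc _ ≤ 1 * ‖blM f S n (S x i)‖ := by gcongr
              _ ≤ K * (k * C + 1) ^ n * ‖S x i‖ := by rw [one_mul]; exact ih _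
              _ ≤ _ := by gcongr; exact hS x i
      _ = K * (k * C + 1) ^ n * ((k * C) * ‖x‖) := by simp; ring
      _ ≤ K * (k * C + 1) ^ n * ((k * C + 1) * ‖x‖) := by gcongr; linarith
      _ = _ := by ring

theorem blP_homog {A : Type*} {k : ℕ} (f : A → ℂ) (S : A → Fin k → A) (n : ℕ) :
    ∀ x, (blP f S n x).IsHomogeneous n := by
  induction n with
  | zero => intro x; exact MvPolynomial.isHomogeneous_C _ _
  | succ n ih =>
    intro x
    refine MvPolynomial.IsHomogeneous.sum _ _ _ fun i _ => ?_
    rw [Nat.add_comm]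
    exact (MvPolynomial.isHomogeneous_X _ i).mul (ih _)

open MvPolynomial in
theorem blP_approx {A : Type*} [CommRing A] [Algebra ℂ A] {k : ℕ} (f : A → ℂ) (S : A → Fin k → A)
    (t : Fin k → A) (hS : ∀ x, x = algebraMap ℂ A (f x) + ∑ i, t i * S x i) (n : ℕ) :
    ∀ x, x - aeval t (∑ j ∈ Finset.range n, blP f S j x) ∈ (Ideal.span (Set.range t)) ^ n := by
  induction n with
  | zero => intro x; simp
  | succ n ih =>
    intro x
    have h : x - aeval t (∑ j ∈ Finset.range (n+1), blP f S j x) =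
        ∑ i, t i * (S x i - aeval t (∑ j ∈ Finset.range n, blP f S j (S x i))) := by
      have hx : ∑ i, t i * S x i = x - algebraMap ℂ A (f x) :=
        eq_sub_of_add_eq' (hS x).symm
      rw [Finset.sum_range_succ']
      simp only [blP, map_add, map_sum, map_mul, aeval_X, aeval_C, mul_sub, Finset.mul_sum,
        Finset.sum_sub_distrib]
      rw [Finset.sum_comm, hx]
      abel
    rw [h, pow_succ']
    exact Ideal.sum_mem _ fun i _ =>
      Ideal.mul_mem_mul (Ideal.subset_span ⟨i, rfl⟩) (ih _)

theorem bl_exists_S {A : Type*} [NormedCommRing A] [NormedAlgebra ℂ A] [CompleteSpace A]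
    (k : ℕ) (t : Fin k → A) (M : Ideal A)
    (hgen : M = Ideal.span (Set.range t))
    (φ : WeakDual.characterSpace ℂ A) (hφ : ∀ x : A, φ x = 0 ↔ x ∈ M) :
    ∃ (S : A → Fin k → A) (C : ℝ), 0 ≤ C ∧ (∀ x i, ‖S x i‖ ≤ C * ‖x‖) ∧
      ∀ x, x = algebraMap ℂ A (φ x) + ∑ i, t i * S x i := by
  let Φ : A →L[ℂ] ℂ := WeakDual.CharacterSpace.toCLM φ
  let L : (Fin k → A) →L[ℂ] A :=
    ∑ i, (ContinuousLinearMap.mul ℂ A (t i)).comp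
      (ContinuousLinearMap.proj (R := ℂ) (φ := fun _ : Fin k => A) i)
  have hL : ∀ v, L v = ∑ i, t i * v i := fun v => by simp [L]
  have hmem : ∀ v, L v ∈ Φ.ker := fun v => by
    rw [LinearMap.mem_ker]
    refine (hφ _).2 ?_
    rw [hL, hgen]
    exact Ideal.sum_mem _ fun i _ => Ideal.mul_mem_right _ _ (Ideal.subset_span ⟨i, rfl⟩)
  let L' := L.codRestrict Φ.ker hmem
  have hcl : IsClosed (Φ.ker : Set A) := Φ.isClosed_ker
  have : CompleteSpace Φ.ker := hcl.completeSpace_coe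
  have hsurj : Function.Surjective L' := by
    rintro ⟨x, hx⟩
    have hx' : x ∈ M := (hφ x).1 hx
    rw [hgen] at hx'
    obtain ⟨c, hc⟩ := (Submodule.mem_span_range_iff_exists_fun A).1 hx'
    refine ⟨c, Subtype.ext ?_⟩
    change L c = x
    rw [hL, ← hc]
    simp [mul_comm]
  obtain ⟨C, hC, hpre⟩ := L'.exists_preimage_norm_le hsurj
  have hker : ∀ x, x - algebraMap ℂ A (φ x) ∈ Φ.ker := fun x => by
    rw [LinearMap.mem_ker]
    change φ (x - algebraMap ℂ A (φ x)) = 0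
    rw [map_sub, AlgHomClass.commutes]; simp
  choose S hS1 hS2 using fun x => hpre ⟨_, hker x⟩
  refine ⟨S, C * (1 + ‖Φ‖ * ‖(1:A)‖), by positivity, ?_, ?_⟩
  · intro x i
    calc ‖S x i‖ ≤ ‖S x‖ := norm_le_pi_norm _ _
      _ ≤ C * ‖x - algebraMap ℂ A (φ x)‖ := hS2 x
      _ ≤ C * (‖x‖ + ‖φ x‖ * ‖(1:A)‖) := by
        gcongr
        refine (norm_sub_le _ _).trans ?_
        rw [norm_algebraMap]
      _ ≤ C * (‖x‖ + (‖Φ‖ * ‖x‖) * ‖(1:A)‖) := by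
        gcongr
        exact Φ.le_opNorm x
      _ = _ := by ring
  · intro x
    have := congrArg Subtype.val (hS1 x)
    change L (S x) = x - algebraMap ℂ A (φ x) at this
    rw [← hL, this]; abel

open MvPolynomial in
theorem blP_eq {A : Type*} [NormedCommRing A] [NormedAlgebra ℂ A] [CompleteSpace A]
    (k : ℕ) (t : Fin k → A) (M : Ideal A)
    (hgen : M = Ideal.span (Set.range t))
    (hdim : ∀ n : ℕ, 1 ≤ n →
      Module.rank ℂ
        (↥(idealPowClosure M n) ⧸
          Submodule.comap (idealPowClosure M n).subtype (idealPowClosure M (n + 1)))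
        = ((n + k - 1).choose n : Cardinal))
    (φ : WeakDual.characterSpace ℂ A) (hφ : ∀ x : A, φ x = 0 ↔ x ∈ M)
    (S : A → Fin k → A) (hS : ∀ x, x = algebraMap ℂ A (φ x) + ∑ i, t i * S x i)
    (n : ℕ) (x : A) (p : MvPolynomial (Fin k) ℂ) (h : x - aeval t p ∈ M ^ (n + 1)) :
    blP φ S n x = homogeneousComponent n p := by
  have h1 := blP_approx φ S t hS (n + 1) x
  rw [← hgen] at h1
  have h2 := Ideal.sub_mem _ h h1
  rw [sub_sub_sub_cancel_left, ← map_sub] at h2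
  have h3 := bl_unique k t M hgen hdim φ hφ (n + 1) _ h2 n (Nat.lt_succ_self n)
  rw [map_sub, map_sum, sub_eq_zero] at h3
  rw [← h3, Finset.sum_eq_single n]
  · exact (homogeneousComponent_eq_self (blP_homog _ _ _ _)).symm
  · intro j _ hj
    rw [homogeneousComponent_of_mem (blP_homog _ _ _ _), if_neg hj.symm]
  · simp

open MvPolynomial in
theorem blP_mul {A : Type*} [NormedCommRing A] [NormedAlgebra ℂ A] [CompleteSpace A]
    (k : ℕ) (t : Fin k → A) (M : Ideal A)
    (hgen : M = Ideal.span (Set.range t))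
    (hdim : ∀ n : ℕ, 1 ≤ n →
      Module.rank ℂ
        (↥(idealPowClosure M n) ⧸
          Submodule.comap (idealPowClosure M n).subtype (idealPowClosure M (n + 1)))
        = ((n + k - 1).choose n : Cardinal))
    (φ : WeakDual.characterSpace ℂ A) (hφ : ∀ x : A, φ x = 0 ↔ x ∈ M)
    (S : A → Fin k → A) (hS : ∀ x, x = algebraMap ℂ A (φ x) + ∑ i, t i * S x i)
    (n : ℕ) (x y : A) :
    blP φ S n (x * y) = ∑ ab ∈ Finset.HasAntidiagonal.antidiagonal n, blP φ S ab.1 x * blP φ S ab.2 y := by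
  have hx := blP_approx φ S t hS (n + 1) x
  have hy := blP_approx φ S t hS (n + 1) y
  rw [← hgen] at hx hy
  rw [blP_eq k t M hgen hdim φ hφ S hS n (x * y)
    ((∑ j ∈ Finset.range (n + 1), blP φ S j x) * (∑ j ∈ Finset.range (n + 1), blP φ S j y))]
  · rw [Finset.sum_mul_sum, ← Finset.sum_product', map_sum]
    have : ∀ ab : ℕ × ℕ, homogeneousComponent n (blP φ S ab.1 x * blP φ S ab.2 y) =
        if n = ab.1 + ab.2 then blP φ S ab.1 x * blP φ S ab.2 y else 0 := fun ab =>
      homogeneousComponent_of_mem ((blP_homog _ _ _ _).mul (blP_homog _ _ _ _))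
    simp only [this]
    rw [← Finset.sum_filter]
    refine Finset.sum_congr ?_ fun _ _ => rfl
    ext ⟨a, b⟩
    simp only [Finset.mem_filter, Finset.mem_product, Finset.mem_range, Finset.HasAntidiagonal.mem_antidiagonal]
    omega
  · rw [map_mul]
    set u := aeval t (∑ j ∈ Finset.range (n + 1), blP φ S j x)
    set v := aeval t (∑ j ∈ Finset.range (n + 1), blP φ S j y)
    have : x * y - u * v = (x - u) * y + u * (y - v) := by ring
    rw [this]
    exact Ideal.add_mem _ (Ideal.mul_mem_right _ _ hx) (Ideal.mul_mem_left _ _ hy)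

theorem blP_add {A : Type*} [NormedCommRing A] [NormedAlgebra ℂ A] [CompleteSpace A]
    (k : ℕ) (t : Fin k → A) (M : Ideal A)
    (hgen : M = Ideal.span (Set.range t))
    (hdim : ∀ n : ℕ, 1 ≤ n →
      Module.rank ℂ
        (↥(idealPowClosure M n) ⧸
          Submodule.comap (idealPowClosure M n).subtype (idealPowClosure M (n + 1)))
        = ((n + k - 1).choose n : Cardinal))
    (φ : WeakDual.characterSpace ℂ A) (hφ : ∀ x : A, φ x = 0 ↔ x ∈ M)
    (S : A → Fin k → A) (hS : ∀ x, x = algebraMap ℂ A (φ x) + ∑ i, t i * S x i)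
    (n : ℕ) (x y : A) :
    blP φ S n (x + y) = blP φ S n x + blP φ S n y := by
  have hx := blP_approx φ S t hS (n + 1) x
  have hy := blP_approx φ S t hS (n + 1) y
  rw [← hgen] at hx hy
  rw [blP_eq k t M hgen hdim φ hφ S hS n x _ hx, blP_eq k t M hgen hdim φ hφ S hS n y _ hy,
    ← map_add]
  apply blP_eq k t M hgen hdim φ hφ S hS n
  rw [map_add, add_sub_add_comm]
  exact Ideal.add_mem _ hx hy

theorem banach_lemma31_part_ii
    {A : Type*} [NormedCommRing A] [NormedAlgebra ℂ A] [CompleteSpace A]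
    (k : ℕ) (t : Fin k → A) (M : Ideal A) (hmax : M.IsMaximal)
    (hgen : M = Ideal.span (Set.range t))
    (hdim : ∀ n : ℕ, 1 ≤ n →
      Module.rank ℂ
        (↥(idealPowClosure M n) ⧸
          Submodule.comap (idealPowClosure M n).subtype (idealPowClosure M (n + 1)))
        = ((n + k - 1).choose n : Cardinal))
    (φ : WeakDual.characterSpace ℂ A) (hφ : ∀ x : A, φ x = 0 ↔ x ∈ M) :
    ∃ δ : ℝ, 0 < δ ∧
      ∃ Γ : (Fin k → ℂ) → WeakDual.characterSpace ℂ A,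
        ContinuousOn Γ {l : Fin k → ℂ | ∀ i, ‖l i‖ < δ} ∧
        Set.InjOn Γ {l : Fin k → ℂ | ∀ i, ‖l i‖ < δ} ∧
        Γ 0 = φ ∧
        ∀ x : A, ∀ l ∈ {l : Fin k → ℂ | ∀ i, ‖l i‖ < δ},
          AnalyticAt ℂ (fun μ => (Γ μ) x) l := by
  obtain ⟨S, C, hC, hSn, hS⟩ := bl_exists_S k t M hgen φ hφ
  set K : ℝ := ‖WeakDual.CharacterSpace.toCLM φ‖ with hKdef
  have hK : 0 ≤ K := norm_nonneg _
  have hφn : ∀ x, ‖φ x‖ ≤ K * ‖x‖ := fun x => (WeakDual.CharacterSpace.toCLM φ).le_opNorm x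
  have hB : 0 < k * C + 1 := by positivity
  have hnorm := blM_norm φ S K C hK hC hφn hSn
  set B : ℝ := k * C + 1
  set δ : ℝ := (2 * B)⁻¹ with hδ
  have hδ0 : 0 < δ := by positivity
  have hBδ : B * δ = 1 / 2 := by rw [hδ]; field_simp
  have hset : {l : Fin k → ℂ | ∀ i, ‖l i‖ < δ} = Metric.ball 0 δ := by
    ext l
    simp [pi_norm_lt_iff hδ0]
  refine ⟨δ, hδ0, ?_⟩
  rw [hset]
  have hbound : ∀ x n, ‖blM φ S n x‖ * δ ^ n ≤ K * ‖x‖ * (1 / 2) ^ n := fun x n => by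
    calc _ ≤ (K * B ^ n * ‖x‖) * δ ^ n := by gcongr; exact hnorm n x
      _ = K * ‖x‖ * (B * δ) ^ n := by rw [mul_pow]; ring
      _ = _ := by rw [hBδ]
  have hsumn : ∀ l ∈ Metric.ball (0 : Fin k → ℂ) δ, ∀ x,
      Summable fun n => ‖MvPolynomial.eval l (blP φ S n x)‖ := by
    intro l hl x
    refine Summable.of_nonneg_of_le (fun _ => norm_nonneg _) (fun n => ?_)
      ((summable_geometric_of_lt_one (by norm_num) (by norm_num : (1/2 : ℝ) < 1)).mul_left
        (K * ‖x‖))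
    refine le_trans ?_ (hbound x n)
    rw [← blM_apply]
    refine ((blM φ S n x).le_opNorm _).trans ?_
    have : ‖l‖ ≤ δ := by simpa using (mem_ball_zero_iff.1 hl).le
    simp only [Finset.prod_const, Finset.card_univ, Fintype.card_fin]
    gcongr
  let G : (Fin k → ℂ) → A → ℂ := fun l x => ∑' n, MvPolynomial.eval l (blP φ S n x)
  have hpoly : ∀ l p, G l (MvPolynomial.aeval t p) = MvPolynomial.eval l p := by
    intro l p
    have h1 : ∀ n, blP φ S n (MvPolynomial.aeval t p) = MvPolynomial.homogeneousComponent n p :=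
      fun n => blP_eq k t M hgen hdim φ hφ S hS n _ p (by simp)
    simp only [G, h1]
    rw [tsum_eq_sum (s := Finset.range (p.totalDegree + 1)), ← map_sum,
      MvPolynomial.sum_homogeneousComponent]
    intro n hn
    rw [MvPolynomial.homogeneousComponent_eq_zero _ _ (by simpa using hn), map_zero]
  have hGmul : ∀ l ∈ Metric.ball (0 : Fin k → ℂ) δ, ∀ x y, G l (x * y) = G l x * G l y := by
    intro l hl x y
    simp only [G]
    rw [tsum_mul_tsum_eq_tsum_sum_antidiagonal_of_summable_norm (hsumn l hl x) (hsumn l hl y)]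
    simp only [blP_mul k t M hgen hdim φ hφ S hS, map_sum, map_mul]
  have hGadd : ∀ l ∈ Metric.ball (0 : Fin k → ℂ) δ, ∀ x y, G l (x + y) = G l x + G l y := by
    intro l hl x y
    simp only [G]
    rw [← (hsumn l hl x).of_norm.tsum_add (hsumn l hl y).of_norm]
    simp only [blP_add k t M hgen hdim φ hφ S hS, map_add]
  have hGalg : ∀ l c, G l (algebraMap ℂ A c) = c := by
    intro l c
    simpa using hpoly l (MvPolynomial.C c)
  let H : (l : Fin k → ℂ) → l ∈ Metric.ball (0 : Fin k → ℂ) δ → A →ₐ[ℂ] ℂ := fun l hl =>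
    { toFun := G l
      map_one' := by simpa using hGalg l 1
      map_mul' := hGmul l hl
      map_zero' := by simpa using hGalg l 0
      map_add' := hGadd l hl
      commutes' := hGalg l }
  classical
  let Γ : (Fin k → ℂ) → WeakDual.characterSpace ℂ A := fun l =>
    if hl : l ∈ Metric.ball (0 : Fin k → ℂ) δ then
      WeakDual.CharacterSpace.equivAlgHom.symm (H l hl) else φ
  have hΓ : ∀ l ∈ Metric.ball (0 : Fin k → ℂ) δ, ∀ x, Γ l x = G l x := by
    intro l hl x
    simp only [Γ, dif_pos hl]
    rfl
  have hGan : ∀ x, AnalyticOnNhd ℂ (fun l => G l x) (Metric.ball 0 δ) := by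
    intro x
    let p : FormalMultilinearSeries ℂ (Fin k → ℂ) ℂ := fun n => blM φ S n x
    have hps : HasFPowerSeriesOnBall (fun l => G l x) p 0 (ENNReal.ofReal δ) :=
      { r_le := by
          refine p.le_radius_of_bound (r := δ.toNNReal) (K * ‖x‖) fun n => ?_
          rw [Real.coe_toNNReal _ hδ0.le]
          refine (hbound x n).trans ?_
          refine mul_le_of_le_one_right (by positivity) (pow_le_one₀ (by norm_num) (by norm_num))
        r_pos := by simpa using hδ0
        hasSum := by
          intro y hy
          rw [Metric.eball_ofReal] at hy
          rw [zero_add]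
          have := (hsumn y hy x).of_norm.hasSum
          simpa only [p, blM_apply] using this }
    have := hps.analyticOnNhd
    rwa [Metric.eball_ofReal] at this
  have hΓan : ∀ x, AnalyticOnNhd ℂ (fun l => Γ l x) (Metric.ball 0 δ) := fun x =>
    (hGan x).congr Metric.isOpen_ball fun l hl => (hΓ l hl x).symm
  refine ⟨Γ, ?_, ?_, ?_, fun x l hl => hΓan x l hl⟩
  · rw [continuousOn_iff_continuous_domRestrict]
    refine Continuous.subtype_mk (WeakDual.continuous_of_continuous_eval fun x => ?_) _
    exact continuousOn_iff_continuous_domRestrict.1 (hΓan x).continuousOn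
  · intro l hl m hm h
    funext i
    have h1 : ∀ l, G l (t i) = l i := fun l => by simpa using hpoly l (MvPolynomial.X i)
    rw [← h1 l, ← h1 m, ← hΓ l hl, ← hΓ m hm, h]
  · apply WeakDual.CharacterSpace.ext
    intro x
    rw [hΓ 0 (Metric.mem_ball_self hδ0)]
    simp only [G]
    rw [tsum_eq_single 0]
    · simp [blP]
    · intro n hn
      obtain ⟨n, rfl⟩ := Nat.exists_eq_succ_of_ne_zero hn
      simp [blP]
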